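/- Let p be an odd prime with p ≠ 5, let a, b, ℓ_1, ℓ_2 be positive integers with b ≥ a and ℓ_1·p^b > ℓ_2·p^a, and set m_p = ⌊ℓ_1·p^{b−a}/z(p)⌋, k_p = ⌊ℓ_2/z(p)⌋, r = ℓ_1 p^b mod z(p), and s = ℓ_2 p^a mod z(p). If p ≡ ±1 (mod 5), then ν_p( C(ℓ_1 p^b, ℓ_2 p^a)_F ) = [r < s]·( a + ν_p(m_p − k_p) + ν_p(F_{z(p)}) ) + ν_p(binomial(m_p,k_p)). If p ≡ ±2 (mod 5), then ν_p( C(ℓ_1 p^b, ℓ_2 p^a)_F ) equals: ν_p(binomial(m_p,k_p)) if r = s or ℓ_2 ≡ 0 (mod z(p)); a + ν_p(F_{z(p)}) + ν_p(m_p − k_p) + ν_p(binomial(m_p,k_p)) if ℓ_1 ≡ 0 and ℓ_2 ≢ 0 (mod z(p)); a/2 + ν_p(binomial(m_p,k_p)) if r > s, ℓ_1, ℓ_2 ≢ 0 (mod z(p)), and a is even; a/2 + ν_p(F_{z(p)}) + ν_p(m_p − k_p) + ν_p(binomial(m_p,k_p)) if r < s, ℓ_1, ℓ_2 ≢ 0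 (mod z(p)), and a is even; (a+1)/2 + ν_p(m_p − k_p) + ν_p(binomial(m_p,k_p)) if r > s, ℓ_1, ℓ_2 ≢ 0 (mod z(p)), and a is odd; and (a−1)/2 + ν_p(F_{z(p)}) + ν_p(binomial(m_p,k_p)) if r < s, ℓ_1, ℓ_2 ≢ 0 (mod z(p)), and a is odd. -/

import Mathlib

/-!
Write `z = z(p)` and `e = ν_p(F_z)`. Lifting the exponent gives `ν_p(F_{jz}) = e + ν_p(j)` for odd
`p`, while `p ∤ F_i` for `z ∤ i`; hence
`ν_p(F_1 ⋯ F_n) = e ⌊n/z⌋ + ν_p(⌊n/z⌋!)` (`padicValNat_fibFactorial`). Since `⌊⌊pn/z⌋/p⌋ = ⌊n/z⌋`,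
Legendre's formula peels the factors `p` off one at a time:
`ν_p(⌊p^a n/z⌋!) = ∑_{i<a} ⌊p^i n/z⌋ + ν_p(⌊n/z⌋!)`.
With `c_i = [p^i n mod z < p^i k mod z]`, the carry by which `⌊p^i n/z⌋` exceeds
`⌊p^i k/z⌋ + ⌊p^i (n-k)/z⌋`, this yields (`padicValNat_fibBinom_pow`)
`ν_p(C(p^a n, p^a k)_F) = e c_a + ∑_{i<a} c_i + ν_p(binomial(⌊n/z⌋, ⌊k/z⌋))
  + c_0 ν_p(⌊n/z⌋ - ⌊k/z⌋)`.
It is applied with `n = ℓ₁ p^(b-a)` and `k = ℓ₂`.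

Finally `p ≡ ±1 (mod 5)` forces `z ∣ p - 1`, so all `c_i` are equal, and `p ≡ ±2 (mod 5)` forces
`z ∣ p + 1`, so multiplication by `p` negates residues modulo `z` and `c_i` has period two; the
six cases are the possible pairs `(c_0, c_1)` together with the parity of `a`. The divisibility of
`p ∓ 1` comes from `F_p ≡ (5/p)` and `2 F_{p-1} ≡ 1 - (5/p)` modulo `p` (`fib_mod_prime`), read off
from the Frobenius map on `𝔽_p[ω]` with `ω² = 1 + ω`.
-/

/-- The Fibonomial coefficient `C(m,k)_F = (F_{m-k+1} ⋯ F_m)/(F_1 ⋯ F_k)`,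
with `C(m,0)_F = 1` and `C(m,k)_F = 0` for `k > m`. -/
def fibBinom (m k : ℕ) : ℕ :=
  (∏ i ∈ Finset.range k, Nat.fib (m - i)) / ∏ i ∈ Finset.range k, Nat.fib (i + 1)

/-- The rank of appearance `z(n)`: the least positive `m` with `n ∣ F_m`. -/
noncomputable def fibRank (n : ℕ) : ℕ := sInf {m : ℕ | 0 < m ∧ n ∣ Nat.fib m}

/-- The sum of the digits of `n` in base `q`. -/
def digitSum (q n : ℕ) : ℕ := (Nat.digits q n).sum

/-! ### Fibonacci numbers modulo `p` and the rank of appearance -/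

section QuadraticAlgebra
open QuadraticAlgebra

theorem omega_pow_succ (R : Type*) [CommRing R] (n : ℕ) :
    (omega : QuadraticAlgebra R 1 1) ^ (n + 1) = ⟨(Nat.fib n : R), (Nat.fib (n + 1) : R)⟩ := by
  induction n with
  | zero => ext <;> simp
  | succ n ih =>
    rw [pow_succ, ih, Nat.fib_add_two]
    ext <;> simp

/-- Raising `(2ω - 1)² = 5` to the power `p`, where `ω² = 1 + ω`, and comparing with
`ω ^ p = F_{p-1} + F_p ω`. -/
theorem fib_mod_prime (p : ℕ) [Fact p.Prime] (hp2 : p ≠ 2) :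
    (Nat.fib p : ZMod p) = legendreSym p 5 ∧
      (2 * Nat.fib (p - 1) : ZMod p) = 1 - legendreSym p 5 := by
  have hp : p.Prime := Fact.out
  have hodd : p % 2 = 1 := hp.eq_two_or_odd.resolve_left hp2
  have : CharP (QuadraticAlgebra (ZMod p) 1 1) p :=
    charP_of_injective_ringHom (f := algebraMap (ZMod p) (QuadraticAlgebra (ZMod p) 1 1))
      (fun x y h => by
        have := congrArg QuadraticAlgebra.re h
        simpa using this) p
  set w : QuadraticAlgebra (ZMod p) 1 1 := omega with hw
  have h2 : (2 : ZMod p) ≠ 0 := by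
    intro h
    have : ((2 : ℕ) : ZMod p) = 0 := by exact_mod_cast h
    rw [ZMod.natCast_eq_zero_iff] at this
    exact hp2 ((Nat.prime_dvd_prime_iff_eq hp Nat.prime_two).1 this)
  have hsq : (2 * w - 1) ^ 2 = 5 := by
    ext <;> simp [pow_two, hw] <;> norm_num
  have hfrob : (2 * w - 1) ^ p = 2 * w ^ p - 1 := by
    rw [sub_pow_char, mul_pow, one_pow]
    have : (2 : QuadraticAlgebra (ZMod p) 1 1) ^ p = 2 := by
      have h := congrArg (algebraMap (ZMod p) (QuadraticAlgebra (ZMod p) 1 1))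
        (ZMod.pow_card (2 : ZMod p))
      rwa [map_pow, map_ofNat] at h
    rw [this]
  have heuler : (2 * w - 1) ^ p = algebraMap _ _ (legendreSym p 5 : ZMod p) * (2 * w - 1) := by
    have h1 : p = 2 * (p / 2) + 1 := by lia
    calc (2 * w - 1) ^ p = (2 * w - 1) ^ (2 * (p / 2) + 1) := congrArg _ h1
      _ = _ := by
        rw [pow_succ, pow_mul, hsq, legendreSym.eq_pow, map_pow, Int.cast_ofNat, map_ofNat]
  have hpow : w ^ p = ⟨(Nat.fib (p - 1) : ZMod p), (Nat.fib p : ZMod p)⟩ := by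
    have := omega_pow_succ (ZMod p) (p - 1)
    rwa [Nat.sub_add_cancel hp.one_le] at this
  rw [hfrob, hpow] at heuler
  have hre := congrArg QuadraticAlgebra.re heuler
  have him := congrArg QuadraticAlgebra.im heuler
  simp [hw] at hre him
  constructor
  · apply mul_left_cancel₀ h2
    linear_combination him
  · linear_combination hre

end QuadraticAlgebra

theorem legendreSym_five (p : ℕ) [Fact p.Prime] (hp2 : p ≠ 2) :
    (p % 5 = 1 ∨ p % 5 = 4 → legendreSym p 5 = 1) ∧
      (p % 5 = 2 ∨ p % 5 = 3 → legendreSym p 5 = -1) := by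
  have : Fact (Nat.Prime 5) := ⟨by norm_num⟩
  have h : legendreSym p 5 = legendreSym 5 p := by
    exact_mod_cast legendreSym.quadratic_reciprocity_one_mod_four (p := 5) (q := p) (by norm_num) hp2
  have h1 : @legendreSym 5 ⟨Nat.prime_five⟩ 1 = 1 := by decide
  have h2 : @legendreSym 5 ⟨Nat.prime_five⟩ 2 = -1 := by decide
  have h3 : @legendreSym 5 ⟨Nat.prime_five⟩ 3 = -1 := by decide
  have h4 : @legendreSym 5 ⟨Nat.prime_five⟩ 4 = 1 := by decide
  rw [h, legendreSym.mod]
  constructor <;> rintro (hh | hh)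
  · rw [show ((p : ℤ) % (5 : ℕ)) = 1 by lia]; exact h1
  · rw [show ((p : ℤ) % (5 : ℕ)) = 4 by lia]; exact h4
  · rw [show ((p : ℤ) % (5 : ℕ)) = 2 by lia]; exact h2
  · rw [show ((p : ℤ) % (5 : ℕ)) = 3 by lia]; exact h3

theorem prime_dvd_fib_pred (p : ℕ) (hp : p.Prime) (hp2 : p ≠ 2) (h5 : p % 5 = 1 ∨ p % 5 = 4) :
    p ∣ Nat.fib (p - 1) := by
  have := Fact.mk hp
  have h := (fib_mod_prime p hp2).2
  rw [(legendreSym_five p hp2).1 h5] at h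
  have h' : ((2 * Nat.fib (p - 1) : ℕ) : ZMod p) = 0 := by push_cast; rw [h]; simp
  rw [ZMod.natCast_eq_zero_iff] at h'
  exact (hp.dvd_mul.1 h').resolve_left
    fun h => hp2 ((Nat.prime_dvd_prime_iff_eq hp Nat.prime_two).1 h)

theorem prime_dvd_fib_succ (p : ℕ) (hp : p.Prime) (hp2 : p ≠ 2) (h5 : p % 5 = 2 ∨ p % 5 = 3) :
    p ∣ Nat.fib (p + 1) := by
  have := Fact.mk hp
  obtain ⟨h1, h⟩ := fib_mod_prime p hp2
  rw [(legendreSym_five p hp2).2 h5] at h h1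
  have hs : Nat.fib (p + 1) = Nat.fib (p - 1) + Nat.fib p := by
    have := Nat.fib_add_two (n := p - 1)
    rwa [show p - 1 + 2 = p + 1 by have := hp.one_le; lia,
      show p - 1 + 1 = p by have := hp.one_le; lia] at this
  have h' : ((2 * Nat.fib (p + 1) : ℕ) : ZMod p) = 0 := by
    rw [hs]; push_cast
    push_cast at h h1
    linear_combination h + 2 * h1
  rw [ZMod.natCast_eq_zero_iff] at h'
  exact (hp.dvd_mul.1 h').resolve_left
    fun h => hp2 ((Nat.prime_dvd_prime_iff_eq hp Nat.prime_two).1 h)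

theorem fibRank_spec (p n : ℕ) (hn : 0 < n) (h : p ∣ Nat.fib n) :
    0 < fibRank p ∧ p ∣ Nat.fib (fibRank p) :=
  Nat.sInf_mem (s := {m : ℕ | 0 < m ∧ p ∣ Nat.fib m}) ⟨n, hn, h⟩

theorem fibRank_dvd_of_dvd (p n : ℕ) (hn : 0 < n) (h : p ∣ Nat.fib n) : fibRank p ∣ n := by
  obtain ⟨hz, hpz⟩ := fibRank_spec p n hn h
  have hg : p ∣ Nat.fib (Nat.gcd (fibRank p) n) := by
    rw [Nat.fib_gcd]; exact Nat.dvd_gcd hpz h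
  have hle : fibRank p ≤ Nat.gcd (fibRank p) n :=
    Nat.sInf_le ⟨Nat.gcd_pos_of_pos_left _ hz, hg⟩
  have := Nat.dvd_antisymm (Nat.gcd_dvd_left (fibRank p) n)
    (by rw [Nat.le_antisymm (Nat.le_of_dvd hz (Nat.gcd_dvd_left _ _)) hle])
  exact this ▸ Nat.gcd_dvd_right _ _

/-! ### Lifting the exponent for Fibonacci numbers -/

/-- The Lucas number `L_n = 2 F_{n+1} - F_n`. -/
def lucasInt (n : ℕ) : ℤ := 2 * Nat.fib (n + 1) - Nat.fib n

theorem two_mul_fib_add (m n : ℕ) :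
    (2 * Nat.fib (m + n) : ℤ) = Nat.fib m * lucasInt n + lucasInt m * Nat.fib n := by
  have h1 : (Nat.fib (m + n + 1) : ℤ) =
      Nat.fib m * Nat.fib n + Nat.fib (m + 1) * Nat.fib (n + 1) := by
    exact_mod_cast Nat.fib_add m n
  have h2 : (Nat.fib (m + n + 2) : ℤ) =
      Nat.fib m * Nat.fib (n + 1) + Nat.fib (m + 1) * Nat.fib (n + 2) := by
    exact_mod_cast Nat.fib_add m (n + 1)
  have h3 : (Nat.fib (m + n + 2) : ℤ) = Nat.fib (m + n) + Nat.fib (m + n + 1) := by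
    exact_mod_cast Nat.fib_add_two
  have h4 : (Nat.fib (n + 2) : ℤ) = Nat.fib n + Nat.fib (n + 1) := by
    exact_mod_cast Nat.fib_add_two
  rw [h4] at h2
  unfold lucasInt
  linear_combination 2 * h2 - 2 * h3 - 2 * h1

theorem two_mul_lucasInt_add (m n : ℕ) :
    2 * lucasInt (m + n) = lucasInt m * lucasInt n + 5 * Nat.fib m * Nat.fib n := by
  have h1 : (Nat.fib (m + n + 1) : ℤ) =
      Nat.fib m * Nat.fib n + Nat.fib (m + 1) * Nat.fib (n + 1) := by
    exact_mod_cast Nat.fib_add m n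
  have h2 := two_mul_fib_add m n
  unfold lucasInt at *
  linear_combination 4 * h1 - h2

/-- The two congruences come from expanding `(L_n + F_n √5) ^ (i+1)`. -/
theorem two_pow_mul_fib_mul (n i : ℕ) :
    (∃ t : ℤ, (2 ^ i * Nat.fib ((i + 1) * n) : ℤ) =
      Nat.fib n * ((i + 1) * lucasInt n ^ i + (Nat.fib n : ℤ) ^ 2 * t)) ∧
    ∃ t : ℤ, 2 ^ i * lucasInt ((i + 1) * n) = lucasInt n ^ (i + 1) + (Nat.fib n : ℤ) ^ 2 * t := by
  induction i with
  | zero => exact ⟨⟨0, by simp⟩, ⟨0, by simp⟩⟩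
  | succ i ih =>
    obtain ⟨⟨t, ht⟩, ⟨u, hu⟩⟩ := ih
    have hF := two_mul_fib_add ((i + 1) * n) n
    have hL := two_mul_lucasInt_add ((i + 1) * n) n
    rw [show (i + 1) * n + n = (i + 1 + 1) * n by ring] at hF hL
    refine ⟨⟨t * lucasInt n + u, ?_⟩,
      ⟨u * lucasInt n + 5 * ((i + 1) * lucasInt n ^ i + (Nat.fib n : ℤ) ^ 2 * t), ?_⟩⟩
    · push_cast
      linear_combination 2 ^ i * hF + lucasInt n * ht + Nat.fib n * hu
    · linear_combination 2 ^ i * hL + lucasInt n * hu + 5 * Nat.fib n * ht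

theorem not_dvd_lucasInt (p n : ℕ) (hp : p.Prime) (hp2 : p ≠ 2) (h : p ∣ Nat.fib n) :
    ¬ (p : ℤ) ∣ lucasInt n := by
  intro hL
  have h' : (p : ℤ) ∣ Nat.fib n := by exact_mod_cast h
  have h1 : (p : ℤ) ∣ ((2 * Nat.fib (n + 1) : ℕ) : ℤ) := by
    have := dvd_add hL h'
    unfold lucasInt at this
    simpa using this
  have h2 : p ∣ 2 * Nat.fib (n + 1) := by exact_mod_cast h1
  rcases hp.dvd_mul.1 h2 with h2 | h2
  · exact hp2 ((Nat.prime_dvd_prime_iff_eq hp Nat.prime_two).1 h2)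
  · have := Nat.dvd_gcd h h2
    rw [Nat.fib_coprime_fib_succ n] at this
    exact hp.one_lt.ne' (Nat.dvd_one.1 this)

theorem padicValNat_two_pow (p i : ℕ) (hp : p.Prime) (hp2 : p ≠ 2) :
    padicValNat p (2 ^ i) = 0 :=
  padicValNat.eq_zero_of_not_dvd fun h =>
    hp2 ((Nat.prime_dvd_prime_iff_eq hp Nat.prime_two).1 (hp.dvd_of_dvd_pow h))

/-- The cofactor `x` is `2 ^ i F_{(i+1)n} / F_n`. -/
theorem padicValNat_fib_mul_aux (p n i : ℕ) (hp : p.Prime) (hp2 : p ≠ 2) (hn : 0 < n) (x : ℤ)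
    (hx : (2 ^ i * Nat.fib ((i + 1) * n) : ℤ) = Nat.fib n * x) :
    padicValNat p (Nat.fib ((i + 1) * n)) = padicValNat p (Nat.fib n) + padicValNat p x.natAbs := by
  have := Fact.mk hp
  have hF : Nat.fib ((i + 1) * n) ≠ 0 := (Nat.fib_pos.2 (by positivity)).ne'
  have hN : 2 ^ i * Nat.fib ((i + 1) * n) = Nat.fib n * x.natAbs := by
    have := congrArg Int.natAbs hx
    simpa [Int.natAbs_mul, Int.natAbs_pow] using this
  have hX : x.natAbs ≠ 0 := by
    intro h0
    rw [h0, mul_zero] at hN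
    exact (mul_ne_zero (by positivity) hF) hN
  have := congrArg (padicValNat p) hN
  rwa [padicValNat.mul (by positivity) hF, padicValNat.mul (Nat.fib_pos.2 hn).ne' hX,
    padicValNat_two_pow p i hp hp2, zero_add] at this

theorem padicValNat_fib_mul_of_not_dvd (p n j : ℕ) (hp : p.Prime) (hp2 : p ≠ 2) (hn : 0 < n)
    (h : p ∣ Nat.fib n) (hj : ¬ p ∣ j) :
    padicValNat p (Nat.fib (j * n)) = padicValNat p (Nat.fib n) := by
  obtain ⟨i, rfl⟩ : ∃ i, j = i + 1 :=
    Nat.exists_eq_succ_of_ne_zero (by rintro rfl; simp at hj)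
  obtain ⟨⟨t, ht⟩, -⟩ := two_pow_mul_fib_mul n i
  rw [padicValNat_fib_mul_aux p n i hp hp2 hn _ ht, Nat.add_eq_left]
  refine padicValNat.eq_zero_of_not_dvd fun hd => ?_
  have hd := Int.natCast_dvd.2 hd
  have h' : (p : ℤ) ∣ Nat.fib n := by exact_mod_cast h
  have hpp := Nat.prime_iff_prime_int.1 hp
  rw [dvd_add_left (Dvd.dvd.mul_right (dvd_pow h' two_ne_zero) t)] at hd
  rcases hpp.dvd_or_dvd hd with hd | hd
  · exact hj (by exact_mod_cast hd)
  · exact not_dvd_lucasInt p n hp hp2 h (hpp.dvd_of_dvd_pow hd)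

theorem padicValNat_fib_prime_mul (p n : ℕ) (hp : p.Prime) (hp2 : p ≠ 2) (hn : 0 < n)
    (h : p ∣ Nat.fib n) :
    padicValNat p (Nat.fib (p * n)) = padicValNat p (Nat.fib n) + 1 := by
  have := Fact.mk hp
  obtain ⟨i, hi⟩ : ∃ i, p = i + 1 := Nat.exists_eq_succ_of_ne_zero hp.ne_zero
  obtain ⟨⟨t, ht⟩, -⟩ := two_pow_mul_fib_mul n i
  obtain ⟨f, hf⟩ := h
  have hpp := Nat.prime_iff_prime_int.1 hp
  have key : ((i + 1) * lucasInt n ^ i + (Nat.fib n : ℤ) ^ 2 * t) =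
      p * (lucasInt n ^ i + p * (f ^ 2 * t)) := by
    rw [hf, show ((i : ℤ) + 1) = p by rw [hi]; push_cast; rfl]; push_cast; ring
  rw [key] at ht
  have hnd : ¬ (p : ℤ) ∣ lucasInt n ^ i + p * (f ^ 2 * t) := by
    rw [dvd_add_left (dvd_mul_right _ _)]
    exact fun hd => not_dvd_lucasInt p n hp hp2 ⟨f, hf⟩ (hpp.dvd_of_dvd_pow hd)
  have := padicValNat_fib_mul_aux p n i hp hp2 hn _ ht
  rw [← hi] at this
  rw [this, Int.natAbs_mul, Int.natAbs_natCast, padicValNat.mul hp.ne_zero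
    (by intro h0; exact hnd (by rw [Int.natAbs_eq_zero.1 h0]; simp)), padicValNat_self,
    padicValNat.eq_zero_of_not_dvd (fun h => hnd (Int.natCast_dvd.2 h))]

theorem padicValNat_fib_mul (p n j : ℕ) (hp : p.Prime) (hp2 : p ≠ 2) (hn : 0 < n)
    (h : p ∣ Nat.fib n) (hj : 0 < j) :
    padicValNat p (Nat.fib (j * n)) = padicValNat p (Nat.fib n) + padicValNat p j := by
  have := Fact.mk hp
  induction j using Nat.strong_induction_on with
  | _ j ih =>
    by_cases hd : p ∣ j
    · obtain ⟨i, rfl⟩ := hd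
      have hi : 0 < i := Nat.pos_of_mul_pos_left hj
      rw [mul_assoc, padicValNat_fib_prime_mul p (i * n) hp hp2 (by positivity)
        (h.trans (Nat.fib_dvd _ _ (dvd_mul_left n i))),
        ih i (lt_mul_of_one_lt_left hi hp.one_lt) hi,
        padicValNat.mul hp.ne_zero hi.ne', padicValNat_self]
      ring
    · rw [padicValNat_fib_mul_of_not_dvd p n j hp hp2 hn h hd,
        padicValNat.eq_zero_of_not_dvd hd, add_zero]

/-! ### Fibonomial coefficients and Fibonacci factorials -/

/-- The Fibonacci factorial `F_1 F_2 ⋯ F_n`. -/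
def fibFactorial (n : ℕ) : ℕ := ∏ i ∈ Finset.range n, Nat.fib (i + 1)

theorem fibFactorial_succ (n : ℕ) : fibFactorial (n + 1) = fibFactorial n * Nat.fib (n + 1) :=
  Finset.prod_range_succ _ _

theorem fibFactorial_ne_zero (n : ℕ) : fibFactorial n ≠ 0 :=
  Finset.prod_ne_zero_iff.2 fun i _ => (Nat.fib_pos.2 i.succ_pos).ne'

theorem prod_fib_mul_fibFactorial (k m : ℕ) :
    (∏ i ∈ Finset.range k, Nat.fib (k + m - i)) * fibFactorial m = fibFactorial (k + m) := by
  induction k with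
  | zero => simp
  | succ k ih =>
    rw [Finset.prod_range_succ', show k + 1 + m = k + m + 1 by ring, fibFactorial_succ, ← ih]
    simp only [Nat.add_sub_add_right, Nat.sub_zero]
    ring

/-- Integrality of the Fibonomial coefficients, by the Pascal-type recurrence coming from
`F_{k+d+1} = F_k F_d + F_{k+1} F_{d+1}`. -/
theorem fibFactorial_dvd_prod (m k : ℕ) :
    fibFactorial k ∣ ∏ i ∈ Finset.range k, Nat.fib (m - i) := by
  induction m generalizing k with
  | zero =>
    cases k with
    | zero => simp [fibFactorial]
    | succ k => simp
  | succ m ih =>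
    cases k with
    | zero => simp [fibFactorial]
    | succ k =>
      rcases lt_or_ge m k with hlt | hle
      · rw [Finset.prod_eq_zero (i := m + 1) (by simp; lia) (by simp)]
        exact dvd_zero _
      · obtain ⟨d, rfl⟩ := Nat.exists_eq_add_of_le hle
        rw [Finset.prod_range_succ']
        simp only [Nat.add_sub_add_right, Nat.sub_zero]
        rw [Nat.fib_add, mul_add]
        apply dvd_add
        · have := ih (k + 1)
          rw [Finset.prod_range_succ, Nat.add_sub_cancel_left] at this
          exact this.trans ⟨Nat.fib k, by ring⟩
        · rw [fibFactorial_succ]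
          exact (mul_dvd_mul_right (ih k) (Nat.fib (k + 1))).trans ⟨Nat.fib (d + 1), by ring⟩

theorem padicValNat_fibBinom_add (p k m : ℕ) (hp : p.Prime) :
    padicValNat p (fibBinom (k + m) k) + padicValNat p (fibFactorial k) +
      padicValNat p (fibFactorial m) = padicValNat p (fibFactorial (k + m)) := by
  have := Fact.mk hp
  have h : fibBinom (k + m) k * fibFactorial k * fibFactorial m = fibFactorial (k + m) := by
    rw [← prod_fib_mul_fibFactorial k m]
    exact congrArg (· * fibFactorial m) (Nat.div_mul_cancel (fibFactorial_dvd_prod (k + m) k))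
  have h0 := fibFactorial_ne_zero (k + m)
  rw [← h] at h0 ⊢
  rw [padicValNat.mul (left_ne_zero_of_mul h0) (right_ne_zero_of_mul h0),
    padicValNat.mul (left_ne_zero_of_mul (left_ne_zero_of_mul h0))
      (right_ne_zero_of_mul (left_ne_zero_of_mul h0))]

theorem padicValNat_fibFactorial (p n : ℕ) (hp : p.Prime) (hp2 : p ≠ 2) (hz : 0 < fibRank p)
    (hpz : p ∣ Nat.fib (fibRank p)) :
    padicValNat p (fibFactorial n) =
      padicValNat p (Nat.fib (fibRank p)) * (n / fibRank p) +
        padicValNat p (n / fibRank p).factorial := by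
  have := Fact.mk hp
  induction n with
  | zero => simp [fibFactorial]
  | succ n ih =>
    rw [fibFactorial_succ, padicValNat.mul (fibFactorial_ne_zero n)
      (Nat.fib_pos.2 (Nat.zero_lt_succ n)).ne', ih, Nat.succ_div]
    split_ifs with hd
    · obtain ⟨j, hj⟩ := hd
      have hj0 : 0 < j := Nat.pos_of_ne_zero (by rintro rfl; simp at hj)
      have hq : n / fibRank p + 1 = j := by
        have h1 : (n + 1) / fibRank p = _ := Nat.succ_div
        rw [if_pos ⟨j, hj⟩, hj, Nat.mul_div_cancel_left _ hz] at h1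
        exact h1.symm
      rw [Nat.succ_eq_add_one, hj, mul_comm (fibRank p) j,
        padicValNat_fib_mul p _ j hp hp2 hz hpz hj0, Nat.factorial_succ, padicValNat.mul (Nat.succ_ne_zero _) (Nat.factorial_ne_zero _), hq, ← hq]
      ring
    · rw [padicValNat.eq_zero_of_not_dvd
        (fun h => hd (fibRank_dvd_of_dvd p _ n.succ_pos h))]
      simp only [add_zero]

/-! ### Carries modulo the rank of appearance -/

/-- The carry in the lowest place when `k` and `n - k` are added in base `z`. -/
def lowCarry (z n k : ℕ) : ℕ := if n % z < k % z then 1 else 0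

theorem add_div_eq_lowCarry (z k m : ℕ) (hz : 0 < z) :
    (k + m) / z = k / z + m / z + lowCarry z (k + m) k := by
  rw [Nat.add_div hz, lowCarry]
  congr 1
  have h1 := Nat.mod_lt k hz
  have h2 := Nat.mod_lt m hz
  have h3 := Nat.add_mod k m z
  rcases le_or_gt z (k % z + m % z) with h | h
  · rw [if_pos h, if_pos]
    rw [h3, Nat.mod_eq_sub_mod h, Nat.mod_eq_of_lt (by lia)]
    lia
  · rw [if_neg (by lia), if_neg]
    rw [h3, Nat.mod_eq_of_lt h]
    lia

theorem padicValNat_factorial_div_pow_mul (p z n a : ℕ) (hp : p.Prime) :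
    padicValNat p (p ^ a * n / z).factorial =
      (∑ i ∈ Finset.range a, p ^ i * n / z) + padicValNat p (n / z).factorial := by
  have := Fact.mk hp
  induction a with
  | zero => simp
  | succ a ih =>
    have h : p ^ (a + 1) * n / z / p = p ^ a * n / z := by
      rw [Nat.div_div_eq_div_mul, mul_comm z p, ← Nat.div_div_eq_div_mul,
        show p ^ (a + 1) * n = p * (p ^ a * n) by ring, Nat.mul_div_cancel_left _ hp.pos]
    rw [← padicValNat_mul_div_factorial, h, padicValNat_factorial_mul, ih,
      Finset.sum_range_succ]
    ring

theorem padicValNat_factorial_div_add (p z k m : ℕ) (hp : p.Prime) (hz : 0 < z) :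
    padicValNat p ((k + m) / z).factorial =
      padicValNat p (k / z).factorial + padicValNat p (m / z).factorial +
        padicValNat p (((k + m) / z).choose (k / z)) +
        lowCarry z (k + m) k * padicValNat p ((k + m) / z - k / z) := by
  have := Fact.mk hp
  have hle : k / z ≤ (k + m) / z := Nat.div_le_div_right (Nat.le_add_right _ _)
  have hch := congrArg (padicValNat p) (Nat.choose_mul_factorial_mul_factorial hle)
  rw [padicValNat.mul (mul_ne_zero (Nat.choose_pos hle).ne' (Nat.factorial_ne_zero _))
    (Nat.factorial_ne_zero _),
    padicValNat.mul (Nat.choose_pos hle).ne' (Nat.factorial_ne_zero _)] at hch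
  have hc := add_div_eq_lowCarry z k m hz
  rw [← hch]
  unfold lowCarry at *
  split_ifs at * with h
  · have hs : (k + m) / z - k / z = m / z + 1 := by lia
    rw [hs, Nat.factorial_succ, padicValNat.mul (Nat.succ_ne_zero _) (Nat.factorial_ne_zero _)]
    ring
  · have hs : (k + m) / z - k / z = m / z := by lia
    rw [hs]
    ring

/-- The valuation as a sum of carries: `ν_p(F_{z(p)})` is weighted by the carry for the full
arguments `p ^ a * n` and `p ^ a * k`, each of the `a` factors `p` contributes one carry by
Legendre's formula, and the last two terms come from the factorials for `n` and `k`. -/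
theorem padicValNat_fibBinom_pow (p n k a : ℕ) (hp : p.Prime) (hp2 : p ≠ 2)
    (hz : 0 < fibRank p) (hpz : p ∣ Nat.fib (fibRank p)) (hkn : k ≤ n) :
    padicValNat p (fibBinom (p ^ a * n) (p ^ a * k)) =
      padicValNat p (Nat.fib (fibRank p)) * lowCarry (fibRank p) (p ^ a * n) (p ^ a * k) +
        (∑ i ∈ Finset.range a, lowCarry (fibRank p) (p ^ i * n) (p ^ i * k)) +
        padicValNat p ((n / fibRank p).choose (k / fibRank p)) +
        lowCarry (fibRank p) n k * padicValNat p (n / fibRank p - k / fibRank p) := by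
  obtain ⟨m, rfl⟩ := Nat.exists_eq_add_of_le hkn
  have h := padicValNat_fibBinom_add p (p ^ a * k) (p ^ a * m) hp
  rw [← mul_add] at h
  simp only [padicValNat_fibFactorial p _ hp hp2 hz hpz,
    padicValNat_factorial_div_pow_mul p _ _ _ hp] at h
  rw [padicValNat_factorial_div_add p _ k m hp hz] at h
  have hc : ∀ i, p ^ i * (k + m) / fibRank p = p ^ i * k / fibRank p + p ^ i * m / fibRank p +
      lowCarry (fibRank p) (p ^ i * (k + m)) (p ^ i * k) := fun i => by
    rw [mul_add]; exact add_div_eq_lowCarry _ _ _ hz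
  have hsum : ∑ i ∈ Finset.range a, p ^ i * (k + m) / fibRank p =
      ∑ i ∈ Finset.range a, p ^ i * k / fibRank p + ∑ i ∈ Finset.range a, p ^ i * m / fibRank p +
      ∑ i ∈ Finset.range a, lowCarry (fibRank p) (p ^ i * (k + m)) (p ^ i * k) := by
    rw [← Finset.sum_add_distrib, ← Finset.sum_add_distrib]
    exact Finset.sum_congr rfl fun i _ => hc i
  have hca := congrArg (padicValNat p (Nat.fib (fibRank p)) * ·) (hc a)
  simp only [mul_add] at hca h hsum ⊢
  lia

/-- A sequence of period two: its even partial sums and its values. -/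
theorem sum_range_alternating (c : ℕ → ℕ) (hc : ∀ i, c (i + 2) = c i) (t : ℕ) :
    ∑ i ∈ Finset.range (2 * t), c i = t * (c 0 + c 1) ∧ c (2 * t) = c 0 ∧ c (2 * t + 1) = c 1 := by
  induction t with
  | zero => simp
  | succ t ih =>
    obtain ⟨h1, h2, h3⟩ := ih
    rw [show 2 * (t + 1) = 2 * t + 1 + 1 by ring, Finset.sum_range_succ, Finset.sum_range_succ,
      h1, h2, h3]
    refine ⟨by ring, ?_, ?_⟩
    · rw [← h2]; exact hc _
    · rw [← h3]; exact hc _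

theorem mul_mod_of_dvd_pred (p z x : ℕ) (hp : 0 < p) (h : z ∣ p - 1) : p * x % z = x % z := by
  obtain ⟨d, hd⟩ := h
  obtain rfl : p = z * d + 1 := by lia
  rw [show (z * d + 1) * x = x + z * (d * x) by ring, Nat.add_mul_mod_self_left]

theorem mul_mod_of_dvd_succ (p z x : ℕ) (hz : 0 < z) (h : z ∣ p + 1) :
    p * x % z = if x % z = 0 then 0 else z - x % z := by
  have h1 : (p * x % z + x % z) % z = 0 := by
    rw [← Nat.add_mod, ← Nat.succ_mul]
    exact Nat.mod_eq_zero_of_dvd (h.mul_right x)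
  have h2 := Nat.mod_lt x hz
  have h3 := Nat.mod_lt (p * x) hz
  obtain ⟨d, hd⟩ := Nat.dvd_of_mod_eq_zero h1
  have hd2 : d < 2 := by
    by_contra! hcon
    have := Nat.mul_le_mul_left z hcon
    lia
  interval_cases d <;> split_ifs <;> lia

theorem p_adic_valuation_fibonomial_pow
    (p : ℕ) (hp : p.Prime) (hp2 : p ≠ 2) (hp5 : p ≠ 5)
    (a b l₁ l₂ : ℕ) (ha : 0 < a) (hb : 0 < b) (hl₁ : 0 < l₁) (hl₂ : 0 < l₂)
    (hab : a ≤ b) (hgt : l₂ * p ^ a < l₁ * p ^ b)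
    (mp kp r s : ℕ)
    (hmp : mp = l₁ * p ^ (b - a) / fibRank p) (hkp : kp = l₂ / fibRank p)
    (hr : r = l₁ * p ^ b % fibRank p) (hs : s = l₂ * p ^ a % fibRank p) :
    (p % 5 = 1 ∨ p % 5 = 4 →
      padicValNat p (fibBinom (l₁ * p ^ b) (l₂ * p ^ a))
        = (if r < s then 1 else 0) *
            (a + padicValNat p (mp - kp) + padicValNat p (Nat.fib (fibRank p)))
          + padicValNat p (Nat.choose mp kp)) ∧
    (p % 5 = 2 ∨ p % 5 = 3 →
      (r = s ∨ l₂ % fibRank p = 0 →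
        padicValNat p (fibBinom (l₁ * p ^ b) (l₂ * p ^ a))
          = padicValNat p (Nat.choose mp kp)) ∧
      (l₁ % fibRank p = 0 ∧ l₂ % fibRank p ≠ 0 →
        padicValNat p (fibBinom (l₁ * p ^ b) (l₂ * p ^ a))
          = a + padicValNat p (Nat.fib (fibRank p)) + padicValNat p (mp - kp)
            + padicValNat p (Nat.choose mp kp)) ∧
      (s < r ∧ l₁ % fibRank p ≠ 0 ∧ l₂ % fibRank p ≠ 0 ∧ Even a →
        padicValNat p (fibBinom (l₁ * p ^ b) (l₂ * p ^ a))
          = a / 2 + padicValNat p (Nat.choose mp kp)) ∧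
      (r < s ∧ l₁ % fibRank p ≠ 0 ∧ l₂ % fibRank p ≠ 0 ∧ Even a →
        padicValNat p (fibBinom (l₁ * p ^ b) (l₂ * p ^ a))
          = a / 2 + padicValNat p (Nat.fib (fibRank p)) + padicValNat p (mp - kp)
            + padicValNat p (Nat.choose mp kp)) ∧
      (s < r ∧ l₁ % fibRank p ≠ 0 ∧ l₂ % fibRank p ≠ 0 ∧ Odd a →
        padicValNat p (fibBinom (l₁ * p ^ b) (l₂ * p ^ a))
          = (a + 1) / 2 + padicValNat p (mp - kp)
            + padicValNat p (Nat.choose mp kp)) ∧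
      (r < s ∧ l₁ % fibRank p ≠ 0 ∧ l₂ % fibRank p ≠ 0 ∧ Odd a →
        padicValNat p (fibBinom (l₁ * p ^ b) (l₂ * p ^ a))
          = (a - 1) / 2 + padicValNat p (Nat.fib (fibRank p))
            + padicValNat p (Nat.choose mp kp))) := by
  obtain ⟨n, hn⟩ : ∃ n, n = l₁ * p ^ (b - a) := ⟨_, rfl⟩
  have hpos : 0 < p ^ a := Nat.pow_pos hp.pos
  have h₁ : l₁ * p ^ b = p ^ a * n := by
    rw [hn, mul_left_comm, ← pow_add, Nat.add_sub_cancel' hab]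
  have h₂ : l₂ * p ^ a = p ^ a * l₂ := mul_comm _ _
  rw [h₁, h₂] at hgt
  have hkn : l₂ ≤ n := (Nat.lt_of_mul_lt_mul_left hgt).le
  rw [h₁] at hr ⊢
  rw [h₂] at hs ⊢
  rw [← hn] at hmp
  constructor
  · intro h5
    have hd := prime_dvd_fib_pred p hp hp2 h5
    have hp1 : 0 < p - 1 := by have := hp.two_le; lia
    obtain ⟨hz, hpz⟩ := fibRank_spec p _ hp1 hd
    have hzd := fibRank_dvd_of_dvd p _ hp1 hd
    have hmod : ∀ i x, p ^ i * x % fibRank p = x % fibRank p := fun i x => by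
      induction i with
      | zero => simp
      | succ i ih => rw [pow_succ', mul_assoc, mul_mod_of_dvd_pred p _ _ hp.pos hzd, ih]
    rw [padicValNat_fibBinom_pow p n l₂ a hp hp2 hz hpz hkn, ← hmp, ← hkp]
    rw [hmod] at hr hs
    have hcar : ∀ i, lowCarry (fibRank p) (p ^ i * n) (p ^ i * l₂) = if r < s then 1 else 0 :=
      fun i => by rw [lowCarry, hmod, hmod, hr, hs]
    have hcar0 : lowCarry (fibRank p) n l₂ = if r < s then 1 else 0 := by
      simpa using hcar 0
    simp only [hcar, hcar0, Finset.sum_const, Finset.card_range, smul_eq_mul]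
    ring
  · intro h5
    have hd := prime_dvd_fib_succ p hp hp2 h5
    obtain ⟨hz, hpz⟩ := fibRank_spec p _ p.succ_pos hd
    have hzd := fibRank_dvd_of_dvd p _ p.succ_pos hd
    rw [padicValNat_fibBinom_pow p n l₂ a hp hp2 hz hpz hkn, ← hmp, ← hkp]
    set z := fibRank p with hzdef
    have hneg := fun x => mul_mod_of_dvd_succ p z x hz hzd
    have hmod2 : ∀ x, p * (p * x) % z = x % z := fun x => by
      have := Nat.mod_lt x hz
      rw [hneg, hneg]
      split_ifs <;> lia
    have hper : ∀ x i, p ^ (i + 2) * x % z = p ^ i * x % z := fun x i => by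
      rw [show p ^ (i + 2) * x = p * (p * (p ^ i * x)) by ring, hmod2]
    -- divisibility by `z` is unaffected by powers of `p`
    have hn0 : n % z = 0 ↔ l₁ % z = 0 := by
      have hstep : ∀ i, p ^ i * l₁ % z = 0 ↔ l₁ % z = 0 := fun i => by
        induction i with
        | zero => simp
        | succ i ih =>
          have := Nat.mod_lt (p ^ i * l₁) hz
          rw [pow_succ', mul_assoc, hneg, ← ih]
          split_ifs <;> lia
      rw [hn, mul_comm]
      exact hstep _
    obtain ⟨c, hc⟩ : ∃ c : ℕ → ℕ, c = fun i => lowCarry z (p ^ i * n) (p ^ i * l₂) := ⟨_, rfl⟩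
    have hcper : ∀ i, c (i + 2) = c i := fun i => by simp only [hc, lowCarry, hper]
    have hc0 : c 0 = if n % z < l₂ % z then 1 else 0 := by simp [hc, lowCarry]
    have hc1 : c 1 = if p * n % z < p * l₂ % z then 1 else 0 := by simp [hc, lowCarry]
    have hlow : lowCarry z n l₂ = c 0 := by simp [hc]
    have hlowa : lowCarry z (p ^ a * n) (p ^ a * l₂) = c a := by rw [hc]
    have hsum : ∑ i ∈ Finset.range a, lowCarry z (p ^ i * n) (p ^ i * l₂) =
      ∑ i ∈ Finset.range a, c i := by rw [hc]
    rw [hlow, hlowa, hsum]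
    have hnlt := Nat.mod_lt n hz
    have hllt := Nat.mod_lt l₂ hz
    rw [hneg, hneg] at hc1
    -- modulo `z`, the residues of `p ^ a * n` and `p ^ a * l₂` depend only on the parity of `a`
    have hrper := (sum_range_alternating (fun i => p ^ i * n % z) (hper n) (a / 2)).2
    have hsper := (sum_range_alternating (fun i => p ^ i * l₂ % z) (hper l₂) (a / 2)).2
    simp only [pow_zero, one_mul, pow_one] at hrper hsper
    rw [hneg] at hrper hsper
    have hS := sum_range_alternating c hcper (a / 2)
    rcases Nat.even_or_odd' a with ⟨t, rfl | rfl⟩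
    · rw [Nat.mul_div_cancel_left t two_pos] at *
      rw [hrper.1] at hr
      rw [hsper.1] at hs
      rw [hS.1, hS.2.1]
      have hne : ¬ Odd (2 * t) := by simp
      simp only [← hn0]
      refine ⟨fun h => ?_, fun h => ?_, fun h => ?_, fun h => ?_, fun h => ?_, fun h => ?_⟩
      · have e0 : c 0 = 0 := by rw [hc0, if_neg]; lia
        have e1 : c 1 = 0 := by rw [hc1, if_neg]; split_ifs <;> lia
        simp [e0, e1]
      · have e0 : c 0 = 1 := by rw [hc0, if_pos]; lia
        have e1 : c 1 = 1 := by rw [hc1, if_pos]; split_ifs <;> lia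
        rw [e0, e1]; ring
      · have e0 : c 0 = 0 := by rw [hc0, if_neg]; lia
        have e1 : c 1 = 1 := by rw [hc1, if_pos]; split_ifs <;> lia
        rw [e0, e1]; ring
      · have e0 : c 0 = 1 := by rw [hc0, if_pos]; lia
        have e1 : c 1 = 0 := by rw [hc1, if_neg]; split_ifs <;> lia
        rw [e0, e1]; ring
      · exact absurd h.2.2.2 hne
      · exact absurd h.2.2.2 hne
    · rw [show (2 * t + 1) / 2 = t by lia] at *
      rw [hrper.2] at hr
      rw [hsper.2] at hs
      rw [Finset.sum_range_succ, hS.1, hS.2.1, hS.2.2]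
      have hne : ¬ Even (2 * t + 1) := by simp
      rw [show (2 * t + 1 + 1) / 2 = t + 1 by lia, show (2 * t + 1 - 1) / 2 = t by lia]
      simp only [← hn0]
      refine ⟨fun h => ?_, fun h => ?_, fun h => ?_, fun h => ?_, fun h => ?_, fun h => ?_⟩
      · have e0 : c 0 = 0 := by rw [hc0, if_neg]; split_ifs at hr hs <;> lia
        have e1 : c 1 = 0 := by rw [hc1, if_neg]; split_ifs at hr hs ⊢ <;> lia
        simp [e0, e1]
      · have e0 : c 0 = 1 := by rw [hc0, if_pos]; lia
        have e1 : c 1 = 1 := by rw [hc1, if_pos]; split_ifs <;> lia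
        rw [e0, e1]; ring
      · exact absurd h.2.2.2 hne
      · exact absurd h.2.2.2 hne
      · have e0 : c 0 = 1 := by rw [hc0, if_pos]; split_ifs at hr hs <;> lia
        have e1 : c 1 = 0 := by rw [hc1, if_neg]; split_ifs at hr hs ⊢ <;> lia
        rw [e0, e1]; ring
      · have e0 : c 0 = 0 := by rw [hc0, if_neg]; split_ifs at hr hs <;> lia
        have e1 : c 1 = 1 := by rw [hc1, if_pos]; split_ifs at hr hs ⊢ <;> lia
        rw [e0, e1]; ring
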